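/- Let δ ∈ ℤ and let λ be a partition. The map (i,j) ↦ λ_i − i + δ/2 is a well-defined bijection from the set {(i,j) ∈ ℕ² : 1 ≤ i ≤ j, −λ_i − λ_j + i + j = δ} onto the set of vertices of L labelled ∘ in the weight diagram x_λ, i.e. onto {n ∈ L : no entry of e_δ(λ) has absolute value n}. In particular, for every such pair (i,j) one has λ_i − i + δ/2 = −(λ_j − j + δ/2) ≥ 0. -/

import Mathlib

open Polynomial

/-- A partition: a weakly decreasing, finitely supported sequence of naturals λ_1, λ_2, …. -/
structure Ptn where
  toFun : ℕ+ → ℕ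
  antitone' : ∀ i j : ℕ+, i ≤ j → toFun j ≤ toFun i
  finite_support' : ∃ N : ℕ+, ∀ i : ℕ+, N ≤ i → toFun i = 0

namespace Ptn

/-- The transpose partition: λ^T_i = #{k ≥ 1 : λ_k ≥ i}. -/
noncomputable def transpose (p : Ptn) (i : ℕ+) : ℕ :=
  Set.ncard {k : ℕ+ | (i : ℕ) ≤ p.toFun k}

/-- The empty partition. -/
def empty : Ptn where
  toFun := fun _ => 0
  antitone' := fun _ _ _ => le_refl 0
  finite_support' := ⟨1, fun _ _ => rfl⟩

end Ptn

/-- e_δ(λ)_i = λ^T_i − δ/2 − i + 1. -/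
noncomputable def ed (δ : ℤ) (p : Ptn) (i : ℕ+) : ℚ :=
  (p.transpose i : ℚ) - (δ : ℚ) / 2 - ((i : ℕ) : ℚ) + 1

/-- The δ-degree of singularity: #{(i,j) : 1 ≤ i < j, e_δ(λ)_i + e_δ(λ)_j = 0}. -/
noncomputable def degd (δ : ℤ) (p : Ptn) : ℕ :=
  Set.ncard {q : ℕ+ × ℕ+ | q.1 < q.2 ∧ ed δ p q.1 + ed δ p q.2 = 0}

/-- The vertex set L: nonnegative integers if δ is even, {1/2, 3/2, …} if δ is odd. -/
def Lset (δ : ℤ) : Set ℚ :=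
  {n : ℚ | 0 ≤ n ∧ ∃ k : ℤ, n + (δ : ℚ) / 2 = (k : ℚ)}

/-- Vertex n is labelled ∘ in x_λ: no entry of e_δ(λ) has absolute value n. -/
def IsCirc (δ : ℤ) (p : Ptn) (n : ℚ) : Prop := ∀ i : ℕ+, |ed δ p i| ≠ n

/-- Vertex n is labelled × in x_λ: n > 0 and both n and −n occur as entries. -/
def IsTimes (δ : ℤ) (p : Ptn) (n : ℚ) : Prop :=
  0 < n ∧ (∃ i : ℕ+, ed δ p i = n) ∧ (∃ i : ℕ+, ed δ p i = -n)

/-- Vertex n is labelled ∧ in x_λ: n > 0, n occurs as an entry and −n does not. -/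
def IsUp (δ : ℤ) (p : Ptn) (n : ℚ) : Prop :=
  0 < n ∧ (∃ i : ℕ+, ed δ p i = n) ∧ ¬ (∃ i : ℕ+, ed δ p i = -n)

/-- Vertex n is labelled ∨ in x_λ: n > 0, −n occurs and n does not, or n = 0 and 0 occurs. -/
def IsDown (δ : ℤ) (p : Ptn) (n : ℚ) : Prop :=
  (0 < n ∧ (∃ i : ℕ+, ed δ p i = -n) ∧ ¬ (∃ i : ℕ+, ed δ p i = n)) ∨
  (n = 0 ∧ ∃ i : ℕ+, ed δ p i = 0)

/-- q is obtained from p by adding one box, in row k. -/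
def AddBoxAt (p q : Ptn) (k : ℕ+) : Prop :=
  q.toFun k = p.toFun k + 1 ∧ ∀ t : ℕ+, t ≠ k → q.toFun t = p.toFun t

/-- q is obtained from p by removing one box, from row l. -/
def RemoveBoxAt (p q : Ptn) (l : ℕ+) : Prop :=
  q.toFun l + 1 = p.toFun l ∧ ∀ t : ℕ+, t ≠ l → q.toFun t = p.toFun t

/-- A box is addable to p at position (k,i): λ_k + 1 = i and increasing the k-th part
yields a partition. -/
def AddableAt (p : Ptn) (k i : ℕ+) : Prop :=
  p.toFun k + 1 = (i : ℕ) ∧ ∃ q : Ptn, AddBoxAt p q k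

/-- A box is removable from p at position (l,j): λ_l = j and decreasing the l-th part
yields a partition. -/
def RemovableAt (p : Ptn) (l j : ℕ+) : Prop :=
  p.toFun l = (j : ℕ) ∧ ∃ q : Ptn, RemoveBoxAt p q l

/-- Edge of the Young graph: q is obtained from p by adding or removing a single box. -/
def YoungEdge (p q : Ptn) : Prop := (∃ k, AddBoxAt p q k) ∨ (∃ k, AddBoxAt q p k)

/-- d(i,j) = λ_i + λ_j − i − j + 1 if i ≤ j, and −λ^T_i − λ^T_j + i + j − 1 if i > j. -/
noncomputable def dbox (p : Ptn) (i j : ℕ+) : ℤ :=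
  if (i : ℕ) ≤ (j : ℕ) then
    (p.toFun i : ℤ) + (p.toFun j : ℤ) - ((i : ℕ) : ℤ) - ((j : ℕ) : ℤ) + 1
  else
    -(p.transpose i : ℤ) - (p.transpose j : ℤ) + ((i : ℕ) : ℤ) + ((j : ℕ) : ℤ) - 1

/-- Hook length h(i,j) = λ_i − j + λ^T_j − i + 1. -/
noncomputable def hook (p : Ptn) (i j : ℕ+) : ℤ :=
  (p.toFun i : ℤ) - ((j : ℕ) : ℤ) + (p.transpose j : ℤ) - ((i : ℕ) : ℤ) + 1

/-- The King polynomial P_λ(u) = ∏_{(i,j)∈[λ]} (u − 1 + d(i,j)) / h(i,j) ∈ ℚ[u]. -/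
noncomputable def king (p : Ptn) : Polynomial ℚ :=
  ∏ᶠ (q : ℕ+ × ℕ+) (_ : (q.2 : ℕ) ≤ p.toFun q.1),
    Polynomial.C ((hook p q.1 q.2 : ℚ))⁻¹ *
      (Polynomial.X + Polynomial.C ((dbox p q.1 q.2 : ℚ) - 1))

/-- (ρ_δ)_i = −δ/2 − i + 1. -/
def rhod (δ : ℤ) (i : ℕ+) : ℚ := -(δ : ℚ) / 2 - ((i : ℕ) : ℚ) + 1

/-- A sequence is dominant if it is strictly decreasing. -/
def Dominant (x : ℕ+ → ℚ) : Prop := ∀ i j : ℕ+, i < j → x j < x i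

/-- ε_i: the sequence with 1 in position i and 0 elsewhere. -/
def eps (i : ℕ+) : ℕ+ → ℚ := fun j => if j = i then 1 else 0

/-- Two sequences are adjacent if they differ by ±ε_i for some i. -/
def AdjacentSeq (x y : ℕ+ → ℚ) : Prop := ∃ i : ℕ+, y = x + eps i ∨ y = x - eps i

/-- x lies in the connected component of ρ_δ in the dominant part of the lattice graph:
x is dominant and is joined to ρ_δ by a finite chain of pairwise adjacent dominant
sequences. -/
def InComponent (δ : ℤ) (x : ℕ+ → ℚ) : Prop :=
  Dominant x ∧ ∃ (r : ℕ) (c : ℕ → ℕ+ → ℚ),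
    c 0 = rhod δ ∧ c r = x ∧ (∀ t ≤ r, Dominant (c t)) ∧
    ∀ t < r, AdjacentSeq (c t) (c (t + 1))

/-- λ ∈ A_δ: λ is joined to ∅ in the Young graph by a chain of δ-regular partitions. -/
def InAdelta (δ : ℤ) (p : Ptn) : Prop :=
  ∃ (r : ℕ) (c : ℕ → Ptn), c 0 = Ptn.empty ∧ c r = p ∧
    (∀ t ≤ r, degd δ (c t) = degd δ Ptn.empty) ∧
    ∀ t < r, YoungEdge (c t) (c (t + 1))

/-!
The integers `λ_i − i` and `j − 1 − λ^T_j` are the particles and the holes of the Maya diagram of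
`λ`. Each integer is exactly one of the two: if `m` lies strictly between the particles of rows
`i + 1` and `i`, then column `m + i + 1` has exactly `i` boxes and `m` is its hole. Since
`−e_δ(λ)_j = j − 1 − λ^T_j + δ/2`, a number in `ℤ + δ/2` has the form `λ_i − i + δ/2` if and only
if its negative is not an entry of `e_δ(λ)`. Hence the vertices `∘` are the `n ≥ 0` for which both
`n` and `−n` are values of the strictly decreasing sequence `i ↦ λ_i − i + δ/2`, and they
correspond to the pairs `i ≤ j` whose two values add up to zero.
-/

theorem mem_iff_le_ncard_of_isLowerSet {s : Set ℕ+} (hs : IsLowerSet s) (hfin : s.Finite)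
    (k : ℕ+) : k ∈ s ↔ (k : ℕ) ≤ s.ncard := by
  constructor
  · intro hk
    have hsub : Set.Iic k ⊆ s := fun l hl => hs hl hk
    calc (k : ℕ) = (Set.Iic k).ncard := by
          rw [← Set.Icc_bot, ← Finset.coe_Icc, Set.ncard_coe_finset, PNat.card_Icc]; simp
      _ ≤ s.ncard := Set.ncard_le_ncard hsub hfin
  · contrapose!
    intro hk
    have hsub : s ⊆ Set.Iio k := fun l hl => lt_of_not_ge fun hkl => hk (hs hkl hl)
    calc s.ncard ≤ (Set.Iio k).ncard := Set.ncard_le_ncard hsub (Set.finite_Iio k)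
      _ = (k : ℕ) - 1 := by
          rw [← Set.Ico_bot, ← Finset.coe_Ico, Set.ncard_coe_finset, PNat.card_Ico]; simp
      _ < k := Nat.sub_lt k.pos one_pos

section StrictAnti

variable {α G : Type*} [LinearOrder α] [AddCommGroup G] [LinearOrder G]
  [IsOrderedAddMonoid G] {f : α → G}

theorem le_iff_nonneg_of_strictAnti_of_add_eq_zero (hf : StrictAnti f) {i j : α}
    (h : f i + f j = 0) : i ≤ j ↔ 0 ≤ f i := by
  rw [← hf.le_iff_ge, eq_neg_of_add_eq_zero_right h, neg_le_self_iff]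

theorem bijOn_apply_fst_of_strictAnti (hf : StrictAnti f) :
    Set.BijOn (fun q : α × α => f q.1) {q | q.1 ≤ q.2 ∧ f q.1 + f q.2 = 0}
      {x | 0 ≤ x ∧ x ∈ Set.range f ∧ -x ∈ Set.range f} := by
  refine ⟨?_, ?_, ?_⟩
  · rintro ⟨i, j⟩ ⟨hij, hsum⟩
    exact ⟨(le_iff_nonneg_of_strictAnti_of_add_eq_zero hf hsum).mp hij, ⟨i, rfl⟩,
      ⟨j, eq_neg_of_add_eq_zero_right hsum⟩⟩
  · rintro ⟨i, j⟩ ⟨-, hsum⟩ ⟨i', j'⟩ ⟨-, hsum'⟩ (hi : f i = f i')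
    have hj : f j = f j' := by
      rw [eq_neg_of_add_eq_zero_right hsum, eq_neg_of_add_eq_zero_right hsum', hi]
    exact Prod.ext (hf.injective hi) (hf.injective hj)
  · rintro x ⟨hx, ⟨i, rfl⟩, ⟨j, hj⟩⟩
    have hsum : f i + f j = 0 := by rw [hj, add_neg_cancel]
    exact ⟨(i, j), ⟨(le_iff_nonneg_of_strictAnti_of_add_eq_zero hf hsum).mpr hx, hsum⟩, rfl⟩

end StrictAnti

namespace Ptn

theorem finite_setOf_le_toFun (p : Ptn) (j : ℕ+) : {k : ℕ+ | (j : ℕ) ≤ p.toFun k}.Finite := by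
  obtain ⟨N, hN⟩ := p.finite_support'
  refine (Set.finite_Iio N).subset fun k (hk : (j : ℕ) ≤ p.toFun k) => ?_
  exact lt_of_not_ge fun hNk => (j.pos.trans_le hk).ne' (hN k hNk)

theorem le_transpose_iff (p : Ptn) (j k : ℕ+) :
    (k : ℕ) ≤ p.transpose j ↔ (j : ℕ) ≤ p.toFun k :=
  (mem_iff_le_ncard_of_isLowerSet (fun _ _ hba ha => ha.trans (p.antitone' _ _ hba))
    (p.finite_setOf_le_toFun j) k).symm

/-- The position `λ_i − i` of the `i`-th particle of the Maya diagram of `λ`. -/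
def particle (p : Ptn) (i : ℕ+) : ℤ := (p.toFun i : ℤ) - ((i : ℕ) : ℤ)

/-- The position `j − 1 − λ^T_j` of the `j`-th hole of the Maya diagram of `λ`. -/
noncomputable def hole (p : Ptn) (j : ℕ+) : ℤ := ((j : ℕ) : ℤ) - 1 - (p.transpose j : ℤ)

theorem strictAnti_particle (p : Ptn) : StrictAnti p.particle := by
  intro i j hij
  have hparts : p.toFun j ≤ p.toFun i := p.antitone' i j hij.le
  have hindices : (i : ℕ) < j := hij
  unfold particle
  omega

theorem exists_particle_le (p : Ptn) (m : ℤ) : ∃ i, p.particle i ≤ m := by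
  obtain ⟨N, hN⟩ := p.finite_support'
  refine ⟨N + m.natAbs.succPNat, ?_⟩
  have hzero : p.toFun (N + m.natAbs.succPNat) = 0 := hN _ (PNat.lt_add_right N _).le
  simp only [particle, hzero, PNat.add_coe, Nat.succPNat_coe]
  omega

theorem particle_ne_hole (p : Ptn) (i j : ℕ+) : p.particle i ≠ p.hole j := by
  have htranspose := p.le_transpose_iff j i
  unfold particle hole
  omega

theorem mem_range_hole_of_particle_one_lt (p : Ptn) {m : ℤ} (h : p.particle 1 < m) :
    m ∈ Set.range p.hole := by
  simp only [particle, PNat.one_coe] at h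
  have hpos : 0 < (m + 1).toNat := by omega
  have htranspose : p.transpose ⟨_, hpos⟩ = 0 := by
    have hone := p.le_transpose_iff ⟨_, hpos⟩ 1
    simp only [PNat.one_coe, PNat.mk_coe] at hone
    omega
  refine ⟨⟨_, hpos⟩, ?_⟩
  simp only [hole, htranspose, PNat.mk_coe]
  omega

theorem mem_range_hole_of_particle_succ_lt (p : Ptn) {m : ℤ} {i : ℕ+}
    (hi : m < p.particle i) (hsucc : p.particle (i + 1) < m) : m ∈ Set.range p.hole := by
  simp only [particle, PNat.add_coe, PNat.one_coe] at hi hsucc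
  have hpos : 0 < (m + i + 1).toNat := by omega
  have htranspose : p.transpose ⟨_, hpos⟩ = i := by
    have hle := p.le_transpose_iff ⟨_, hpos⟩ i
    have hlt := p.le_transpose_iff ⟨_, hpos⟩ (i + 1)
    simp only [PNat.add_coe, PNat.one_coe, PNat.mk_coe] at hle hlt
    omega
  refine ⟨⟨_, hpos⟩, ?_⟩
  simp only [hole, htranspose, PNat.mk_coe]
  omega

theorem mem_range_particle_or_mem_range_hole (p : Ptn) (m : ℤ) :
    m ∈ Set.range p.particle ∨ m ∈ Set.range p.hole := by
  by_contra! ⟨hparticle, hhole⟩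
  have lt_of_not_lt : ∀ i, ¬ p.particle i < m → m < p.particle i := fun i hi =>
    (not_lt.mp hi).lt_of_ne fun h => hparticle ⟨i, h.symm⟩
  have lt_particle : ∀ i, m < p.particle i := by
    intro i
    induction i with
    | one => exact lt_of_not_lt 1 fun h => hhole (p.mem_range_hole_of_particle_one_lt h)
    | succ i ih =>
      exact lt_of_not_lt (i + 1) fun h => hhole (p.mem_range_hole_of_particle_succ_lt ih h)
  obtain ⟨i, hi⟩ := p.exists_particle_le m
  exact (lt_particle i).not_ge hi

theorem isCompl_range_particle_range_hole (p : Ptn) :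
    IsCompl (Set.range p.particle) (Set.range p.hole) := by
  refine ⟨Set.disjoint_range_iff.mpr p.particle_ne_hole, codisjoint_iff.mpr ?_⟩
  exact Set.eq_univ_of_forall p.mem_range_particle_or_mem_range_hole

/-- The particle positions shifted by `δ/2`, so that they lie in the coset `ℤ + δ/2` containing
the vertices of the weight diagram and the entries of `e_δ(λ)`. -/
def shiftedParticle (p : Ptn) (δ : ℤ) (i : ℕ+) : ℚ :=
  (p.toFun i : ℚ) - ((i : ℕ) : ℚ) + (δ : ℚ) / 2

theorem shiftedParticle_eq_particle_add (p : Ptn) (δ : ℤ) (i : ℕ+) :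
    p.shiftedParticle δ i = p.particle i + (δ : ℚ) / 2 := by
  simp [shiftedParticle, particle]

theorem strictAnti_shiftedParticle (p : Ptn) (δ : ℤ) : StrictAnti (p.shiftedParticle δ) := by
  intro i j hij
  simpa [shiftedParticle_eq_particle_add] using p.strictAnti_particle hij

theorem shiftedParticle_add_eq_zero_iff (p : Ptn) (δ : ℤ) (i j : ℕ+) :
    p.shiftedParticle δ i + p.shiftedParticle δ j = 0 ↔
      -(p.toFun i : ℤ) - (p.toFun j : ℤ) + ((i : ℕ) : ℤ) + ((j : ℕ) : ℤ) = δ := by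
  rw [← @Int.cast_inj ℚ]
  push_cast [shiftedParticle]
  constructor <;> intro h <;> linarith

theorem neg_ed_eq_hole_add (p : Ptn) (δ : ℤ) (j : ℕ+) : -ed δ p j = p.hole j + (δ : ℚ) / 2 := by
  push_cast [ed, hole]
  ring

theorem mem_range_shiftedParticle_iff (p : Ptn) {δ : ℤ} {x : ℚ}
    (hx : ∃ k : ℤ, x + (δ : ℚ) / 2 = k) :
    x ∈ Set.range (p.shiftedParticle δ) ↔ -x ∉ Set.range (ed δ p) := by
  obtain ⟨m, rfl⟩ : ∃ m : ℤ, x = m + (δ : ℚ) / 2 := by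
    obtain ⟨k, hk⟩ := hx
    exact ⟨k - δ, by push_cast; linarith⟩
  have hparticle : (m : ℚ) + (δ : ℚ) / 2 ∈ Set.range (p.shiftedParticle δ) ↔
      m ∈ Set.range p.particle := by
    simp [shiftedParticle_eq_particle_add]
  have hhole : -((m : ℚ) + (δ : ℚ) / 2) ∈ Set.range (ed δ p) ↔ m ∈ Set.range p.hole := by
    simp only [Set.mem_range, ← neg_inj (a := ed δ p _), neg_ed_eq_hole_add, neg_neg, add_left_inj,
      Int.cast_inj]
  rw [hparticle, hhole, ← p.isCompl_range_particle_range_hole.symm.compl_eq, Set.mem_compl_iff]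

theorem isCirc_iff_notMem_range_ed (p : Ptn) (δ : ℤ) {n : ℚ} (hn : 0 ≤ n) :
    IsCirc δ p n ↔ n ∉ Set.range (ed δ p) ∧ -n ∉ Set.range (ed δ p) := by
  simp only [IsCirc, ne_eq, abs_eq hn, not_or, Set.mem_range, not_exists, forall_and]

theorem isCirc_iff_mem_range_shiftedParticle (p : Ptn) {δ : ℤ} {n : ℚ} (hn : n ∈ Lset δ) :
    IsCirc δ p n ↔
      n ∈ Set.range (p.shiftedParticle δ) ∧ -n ∈ Set.range (p.shiftedParticle δ) := by
  obtain ⟨hnonneg, k, hk⟩ := hn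
  have hneg : ∃ l : ℤ, -n + (δ : ℚ) / 2 = l := ⟨δ - k, by push_cast; linarith⟩
  rw [p.mem_range_shiftedParticle_iff ⟨k, hk⟩, p.mem_range_shiftedParticle_iff hneg,
    neg_neg, p.isCirc_iff_notMem_range_ed δ hnonneg, and_comm]

theorem shiftedParticle_mem_Lset {p : Ptn} {δ : ℤ} {i : ℕ+} (h : 0 ≤ p.shiftedParticle δ i) :
    p.shiftedParticle δ i ∈ Lset δ :=
  ⟨h, p.particle i + δ, by rw [shiftedParticle_eq_particle_add]; push_cast; ring⟩

theorem mem_Lset_and_isCirc_iff (p : Ptn) (δ : ℤ) (n : ℚ) :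
    n ∈ Lset δ ∧ IsCirc δ p n ↔
      0 ≤ n ∧ n ∈ Set.range (p.shiftedParticle δ) ∧ -n ∈ Set.range (p.shiftedParticle δ) := by
  constructor
  · rintro ⟨hn, hcirc⟩
    exact ⟨hn.1, (p.isCirc_iff_mem_range_shiftedParticle hn).mp hcirc⟩
  · rintro ⟨hnonneg, ⟨i, rfl⟩, hneg⟩
    have hmem := shiftedParticle_mem_Lset hnonneg
    exact ⟨hmem, (p.isCirc_iff_mem_range_shiftedParticle hmem).mpr ⟨⟨i, rfl⟩, hneg⟩⟩

end Ptn

/-- (i,j) ↦ λ_i − i + δ/2 is a bijection from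
{(i,j) : 1 ≤ i ≤ j, −λ_i − λ_j + i + j = δ} onto the ∘'s of x_λ, and for every such
pair λ_i − i + δ/2 = −(λ_j − j + δ/2) ≥ 0. -/
theorem stmt6 (δ : ℤ) (p : Ptn) :
    Set.BijOn (fun q : ℕ+ × ℕ+ => (p.toFun q.1 : ℚ) - ((q.1 : ℕ) : ℚ) + (δ : ℚ) / 2)
      {q : ℕ+ × ℕ+ | q.1 ≤ q.2 ∧
        -(p.toFun q.1 : ℤ) - (p.toFun q.2 : ℤ) + ((q.1 : ℕ) : ℤ) + ((q.2 : ℕ) : ℤ) = δ}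
      {n : ℚ | n ∈ Lset δ ∧ IsCirc δ p n} ∧
    ∀ q : ℕ+ × ℕ+, (q.1 ≤ q.2 ∧
        -(p.toFun q.1 : ℤ) - (p.toFun q.2 : ℤ) + ((q.1 : ℕ) : ℤ) + ((q.2 : ℕ) : ℤ) = δ) →
      ((p.toFun q.1 : ℚ) - ((q.1 : ℕ) : ℚ) + (δ : ℚ) / 2
          = -((p.toFun q.2 : ℚ) - ((q.2 : ℕ) : ℚ) + (δ : ℚ) / 2) ∧
        0 ≤ (p.toFun q.1 : ℚ) - ((q.1 : ℕ) : ℚ) + (δ : ℚ) / 2) := by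
  simp only [← p.shiftedParticle_add_eq_zero_iff, p.mem_Lset_and_isCirc_iff]
  have hanti := p.strictAnti_shiftedParticle δ
  refine ⟨bijOn_apply_fst_of_strictAnti hanti, fun q ⟨hle, hsum⟩ =>
    ⟨eq_neg_of_add_eq_zero_left hsum, ?_⟩⟩
  exact (le_iff_nonneg_of_strictAnti_of_add_eq_zero hanti hsum).mp hle
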